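/- arXiv:math/0310364 — 3 statements merged into one kernel-verified Lean document; each statement's English description precedes it below -/
import Mathlib

section
/- Let s be a complex number with Re(s) > 1/2. Then the limit lim_{ε→0⁺} [ 2(2s−1) ∫₀^{1/ε} ( ∑_{k=1}^∞ g_s(1 + k²/(4y²)) ) y^{-2} dy + log ε ] exists and equals −log 2 − Ψ(s + 1/2) + 1/(2s−1). (This is Proposition 2.4 of the paper: the regularized trace Φ_H(s) of the resolvent of the Laplacian on the parabolic cylinder (horn) H = Γ_∞\ℍ equals −log 2 − Ψ(s+1/2) + 1/(2s−1).) -/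
open MeasureTheory

/-- The Green's function of the resolvent `(Δ_ℍ - s(1-s))⁻¹` on the hyperbolic plane,
expressed in the point-pair invariant `σ = cosh²(d(z,z')/2)`, via Euler's integral
representation: `g_s(σ) = (1/(4π)) ∫₀¹ t^(s-1) (1-t)^(s-1) (σ-t)^(-s) dt`. -/
noncomputable def greenH (s : ℂ) (σ : ℝ) : ℂ :=
  (1 / (4 * (Real.pi : ℂ))) * ∫ t in Set.Ioo (0:ℝ) 1,
    (t : ℂ) ^ (s - 1) * ((1 : ℂ) - (t : ℂ)) ^ (s - 1) * ((σ : ℂ) - (t : ℂ)) ^ (-s)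

/-- The digamma function `Ψ(z) = Γ'(z)/Γ(z)`. -/
noncomputable def digamma (z : ℂ) : ℂ := deriv Complex.Gamma z / Complex.Gamma z

/-! Put `h v = greenH s (1 + v)`, so that the integrand is a sum of values of `h` at `k² / (4 y²)`.
In the variable `x = 1 / y`, with `f u = h (u² / 4)`, the measure `dy / y²` becomes `dx` on `(ε, ∞)`
and the sum becomes `∑ f (k x)`. Substituting `u = k x` in the `k`-th term and summing over `k`
gives `∫ H_⌊u/ε⌋ f u du`, with `H_n` the harmonic numbers. Now `H_⌊u/ε⌋ + log ε → γ + log u`,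
dominated by `1 + |log u|`, so adding `log ε ∫ f` gives the limit `∫ (γ + log u) f u du`, which is
`(γ + log 2) M + M' / 2` in terms of the Mellin transform `M` of `h` and its derivative at `1/2`.

Pulling `1 - t` out of `1 + v - t` exhibits `h` as a superposition of dilates of `(1 + v) ^ (-s)`,
whence `M w = Γ(w)² Γ(s - w) / (4π Γ(s + w))` by two Beta integrals. Thus
`M (1/2) = 1 / (2 (2 s - 1))`, and `M' w / M w = 2 Ψ(w) - Ψ(s - w) - Ψ(s + w)`. -/

section

open Set Filter Topology

section SumsOverDilates

lemma tendsto_harmonic_floor_sub_log :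
    Tendsto (fun x : ℝ ↦ (harmonic ⌊x⌋₊ : ℝ) - Real.log x) atTop
      (𝓝 Real.eulerMascheroniConstant) := by
  have hharm := Real.tendsto_harmonic_sub_log.comp (tendsto_nat_floor_atTop (α := ℝ))
  have hlog : Tendsto (fun x : ℝ ↦ Real.log (⌊x⌋₊ / x)) atTop (𝓝 0) := by
    simpa only [Real.log_one] using
      (tendsto_nat_floor_div_atTop (R := ℝ)).log one_ne_zero
  refine (add_zero Real.eulerMascheroniConstant ▸ hharm.add hlog).congr' ?_
  filter_upwards [eventually_ge_atTop 1] with x hx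
  have hfloor : (⌊x⌋₊ : ℝ) ≠ 0 := Nat.cast_ne_zero.mpr (Nat.floor_pos.mpr hx).ne'
  rw [Function.comp_apply, Real.log_div hfloor (by positivity)]
  ring

lemma tendsto_harmonic_floor_div_add_log {u : ℝ} (hu : 0 < u) :
    Tendsto (fun ε : ℝ ↦ (harmonic ⌊u / ε⌋₊ : ℝ) + Real.log ε) (𝓝[>] 0)
      (𝓝 (Real.eulerMascheroniConstant + Real.log u)) := by
  have hdiv : Tendsto (fun ε : ℝ ↦ u / ε) (𝓝[>] 0) atTop :=
    tendsto_inv_nhdsGT_zero.const_mul_atTop hu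
  refine ((tendsto_harmonic_floor_sub_log.comp hdiv).add_const (Real.log u)).congr' ?_
  filter_upwards [self_mem_nhdsWithin] with ε (hε : 0 < ε)
  rw [Function.comp_apply, Real.log_div hu.ne' hε.ne']
  ring

lemma abs_harmonic_floor_div_add_log_le {ε u : ℝ} (hε : 0 < ε) (hε1 : ε ≤ 1) (hu : 0 < u) :
    |(harmonic ⌊u / ε⌋₊ : ℝ) + Real.log ε| ≤ 1 + |Real.log u| := by
  have hlog : Real.log (u / ε) = Real.log u - Real.log ε := Real.log_div hu.ne' hε.ne'
  have hle := le_abs_self (Real.log u)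
  have hge := neg_abs_le (Real.log u)
  rw [abs_le]
  rcases le_or_gt 1 (u / ε) with h | h
  · have hlower := log_le_harmonic_floor (u / ε) (by positivity)
    have hupper := harmonic_floor_le_one_add_log (u / ε) h
    constructor <;> linarith
  · have hneg : Real.log (u / ε) ≤ 0 := Real.log_nonpos (by positivity) h.le
    have hlogε : Real.log ε ≤ 0 := Real.log_nonpos hε.le hε1
    rw [Nat.floor_eq_zero.mpr h, harmonic_zero, Rat.cast_zero, zero_add]
    constructor <;> linarith

lemma hasSum_indicator_Ici_inv {ε : ℝ} (hε : 0 < ε) (u : ℝ) :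
    HasSum (fun k : ℕ ↦ (Ici ((k + 1) * ε)).indicator (fun _ ↦ (k + 1 : ℝ)⁻¹) u)
      (harmonic ⌊u / ε⌋₊) := by
  have hmem (k : ℕ) : u ∈ Ici ((k + 1) * ε) ↔ k ∈ Finset.range ⌊u / ε⌋₊ := by
    rw [Finset.mem_range, ← Nat.add_one_le_iff, Nat.le_floor_iff' k.succ_ne_zero,
      le_div_iff₀ hε, mem_Ici, Nat.cast_add_one]
  have hsum : (harmonic ⌊u / ε⌋₊ : ℝ) = ∑ k ∈ Finset.range ⌊u / ε⌋₊,
      (Ici ((k + 1) * ε)).indicator (fun _ ↦ (k + 1 : ℝ)⁻¹) u := by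
    rw [harmonic, Rat.cast_sum]
    refine Finset.sum_congr rfl fun k hk ↦ ?_
    rw [indicator_of_mem ((hmem k).mpr hk)]
    push_cast
    rfl
  rw [hsum]
  exact hasSum_sum_of_ne_finset_zero fun k hk ↦ indicator_of_notMem (mt (hmem k).mp hk) _

lemma measurable_harmonic_floor_div (ε : ℝ) : Measurable fun u : ℝ ↦ (harmonic ⌊u / ε⌋₊ : ℝ) :=
  (measurable_from_top (f := fun n : ℕ ↦ (harmonic n : ℝ))).comp
    (Nat.measurable_floor.comp (measurable_id.div_const ε))

variable {E : Type*} [NormedAddCommGroup E] [NormedSpace ℝ E]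

lemma integral_Ioi_comp_mul_eq_integral_indicator {c ε : ℝ} (hc : 0 < c) (hε : 0 < ε) (f : ℝ → E) :
    ∫ x in Ioi ε, f (c * x) =
      ∫ u in Ioi 0, (Ici (c * ε)).indicator (fun _ ↦ c⁻¹) u • f u := by
  have hind (u : ℝ) : (Ici (c * ε)).indicator (fun _ ↦ c⁻¹) u • f u =
      (Ici (c * ε)).indicator (fun u ↦ c⁻¹ • f u) u := by
    simp only [indicator_apply, ite_smul, zero_smul]
  simp_rw [hind]
  rw [integral_comp_mul_left_Ioi f ε hc, setIntegral_indicator measurableSet_Ici,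
    inter_eq_right.mpr (Ici_subset_Ioi.mpr (mul_pos hc hε)), integral_Ici_eq_integral_Ioi,
    integral_smul]

variable {f : ℝ → E} {ε : ℝ}

lemma integrableOn_indicator_Ici_smul (hf : IntegrableOn f (Ioi 0)) (a c : ℝ) :
    IntegrableOn (fun u ↦ (Ici a).indicator (fun _ ↦ c) u • f u) (Ioi 0) :=
  ((hf.smul c).indicator (measurableSet_Ici (a := a))).congr <| .of_forall fun u ↦ by
    simp only [indicator_apply, Pi.smul_apply, ite_smul, zero_smul]

lemma summable_integral_norm_indicator_smul (hε : 0 < ε) (hf : IntegrableOn f (Ioi 0))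
    (hharm : IntegrableOn (fun u ↦ (harmonic ⌊u / ε⌋₊ : ℝ) • f u) (Ioi 0)) :
    Summable fun k : ℕ ↦ ∫ u in Ioi 0,
      ‖(Ici ((k + 1) * ε)).indicator (fun _ ↦ (k + 1 : ℝ)⁻¹) u • f u‖ := by
  refine summable_of_sum_le (c := ∫ u in Ioi 0, ‖(harmonic ⌊u / ε⌋₊ : ℝ) • f u‖)
    (fun k ↦ integral_nonneg fun u ↦ norm_nonneg _) fun t ↦ ?_
  rw [← integral_finsetSum _ fun k _ ↦ (integrableOn_indicator_Ici_smul hf _ _).norm]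
  refine integral_mono (integrable_finsetSum _ fun k _ ↦
    (integrableOn_indicator_Ici_smul hf _ _).norm) hharm.norm fun u ↦ ?_
  have hnonneg (k : ℕ) : 0 ≤ (Ici ((k + 1) * ε)).indicator (fun _ ↦ (k + 1 : ℝ)⁻¹) u :=
    indicator_nonneg (fun _ _ ↦ by positivity) u
  have hle := sum_le_hasSum t (fun k _ ↦ hnonneg k) (hasSum_indicator_Ici_inv hε u)
  simp only [norm_smul, ← Finset.sum_mul, Real.norm_of_nonneg (hnonneg _)]
  gcongr
  exact hle.trans (le_abs_self _)

lemma integral_tsum_comp_mul_eq_integral_harmonic_smul (hε : 0 < ε) (hf : IntegrableOn f (Ioi 0))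
    (hharm : IntegrableOn (fun u ↦ (harmonic ⌊u / ε⌋₊ : ℝ) • f u) (Ioi 0)) :
    ∫ x in Ioi ε, ∑' k : ℕ, f ((k + 1) * x) =
      ∫ u in Ioi 0, (harmonic ⌊u / ε⌋₊ : ℝ) • f u := by
  have hk (k : ℕ) : (0 : ℝ) < k + 1 := k.cast_add_one_pos
  have hsummable := summable_integral_norm_indicator_smul hε hf hharm
  have hdilate := hasSum_integral_of_summable_integral_norm (μ := volume.restrict (Ioi ε))
    (F := fun k : ℕ ↦ fun x ↦ f ((k + 1) * x))
    (fun k ↦ (integrableOn_Ioi_comp_mul_left_iff f ε (hk k)).mpr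
      (hf.mono_set (Ioi_subset_Ioi (mul_pos (hk k) hε).le)))
    (hsummable.congr fun k ↦ by
      rw [integral_Ioi_comp_mul_eq_integral_indicator (hk k) hε fun u ↦ ‖f u‖]
      refine integral_congr_ae (.of_forall fun u ↦ ?_)
      simp only [norm_smul, smul_eq_mul]
      rw [Real.norm_of_nonneg (indicator_nonneg (fun _ _ ↦ (inv_pos.mpr (hk k)).le) u)])
  have hindicator := hasSum_integral_of_summable_integral_norm
    (fun k : ℕ ↦ integrableOn_indicator_Ici_smul hf ((k + 1) * ε) (k + 1 : ℝ)⁻¹) hsummable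
  simp only [integral_Ioi_comp_mul_eq_integral_indicator (hk _) hε f] at hdilate
  rw [hdilate.unique hindicator]
  congr with u
  exact ((hasSum_indicator_Ici_inv hε u).smul_const (f u)).tsum_eq

lemma tendsto_integral_harmonic_floor_add_log_smul (hf : IntegrableOn f (Ioi 0))
    (hlog : IntegrableOn (fun u ↦ Real.log u • f u) (Ioi 0)) :
    (∀ᶠ ε in 𝓝[>] 0, IntegrableOn
      (fun u ↦ ((harmonic ⌊u / ε⌋₊ : ℝ) + Real.log ε) • f u) (Ioi 0)) ∧
    Tendsto (fun ε ↦ ∫ u in Ioi 0, ((harmonic ⌊u / ε⌋₊ : ℝ) + Real.log ε) • f u) (𝓝[>] 0)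
      (𝓝 (∫ u in Ioi 0, (Real.eulerMascheroniConstant + Real.log u) • f u)) := by
  have hmeas (ε : ℝ) : AEStronglyMeasurable
      (fun u ↦ ((harmonic ⌊u / ε⌋₊ : ℝ) + Real.log ε) • f u) (volume.restrict (Ioi 0)) :=
    ((measurable_harmonic_floor_div ε).add_const _).aestronglyMeasurable.smul hf.1
  have hdom : IntegrableOn (fun u ↦ ‖f u‖ + ‖Real.log u • f u‖) (Ioi 0) := hf.norm.add hlog.norm
  have hbound : ∀ᶠ ε in 𝓝[>] 0, ∀ᵐ u ∂volume.restrict (Ioi 0),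
      ‖((harmonic ⌊u / ε⌋₊ : ℝ) + Real.log ε) • f u‖ ≤ ‖f u‖ + ‖Real.log u • f u‖ := by
    filter_upwards [Ioc_mem_nhdsGT zero_lt_one] with ε hε
    filter_upwards [ae_restrict_mem measurableSet_Ioi] with u hu
    rw [norm_smul, norm_smul, Real.norm_eq_abs, Real.norm_eq_abs, ← one_add_mul]
    gcongr
    exact abs_harmonic_floor_div_add_log_le hε.1 hε.2 hu
  refine ⟨hbound.mono fun ε h ↦ hdom.mono' (hmeas ε) h,
    tendsto_integral_filter_of_dominated_convergence _ (.of_forall hmeas) hbound hdom ?_⟩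
  filter_upwards [ae_restrict_mem measurableSet_Ioi] with u hu
  exact (tendsto_harmonic_floor_div_add_log hu).smul_const (f u)

theorem tendsto_integral_tsum_comp_mul_add_log_smul (hf : IntegrableOn f (Ioi 0))
    (hlog : IntegrableOn (fun u ↦ Real.log u • f u) (Ioi 0)) :
    Tendsto (fun ε ↦ (∫ x in Ioi ε, ∑' k : ℕ, f ((k + 1) * x)) +
        Real.log ε • ∫ u in Ioi 0, f u) (𝓝[>] 0)
      (𝓝 (Real.eulerMascheroniConstant • (∫ u in Ioi 0, f u) +
        ∫ u in Ioi 0, Real.log u • f u)) := by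
  obtain ⟨hint, hlim⟩ := tendsto_integral_harmonic_floor_add_log_smul hf hlog
  simp only [add_smul] at hint hlim
  rw [← integral_smul, ← integral_add (hf.fun_smul _) hlog]
  refine hlim.congr' ?_
  filter_upwards [hint, self_mem_nhdsWithin] with ε hint (hε : 0 < ε)
  have hharm : IntegrableOn (fun u ↦ (harmonic ⌊u / ε⌋₊ : ℝ) • f u) (Ioi 0) := by
    simpa only [Pi.sub_def, Pi.smul_apply, add_sub_cancel_right] using!
      hint.sub (hf.smul (Real.log ε))
  rw [integral_tsum_comp_mul_eq_integral_harmonic_smul hε hf hharm,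
    integral_add hharm (hf.fun_smul _), integral_smul]

end SumsOverDilates

section HornTrace

lemma integral_Ioo_inv_sq_smul_comp_inv {E : Type*} [NormedAddCommGroup E] [NormedSpace ℝ E]
    {ε : ℝ} (hε : 0 < ε) (f : ℝ → E) :
    ∫ y in Ioo 0 (1 / ε), (y ^ 2)⁻¹ • f y⁻¹ = ∫ x in Ioi ε, f x := by
  have himage : Inv.inv '' Ioo 0 (1 / ε) = Ioi ε := by
    rw [image_inv_eq_inv, inv_Ioo_0_left (one_div_pos.mpr hε), one_div, inv_inv]
  rw [← himage, integral_image_eq_integral_abs_deriv_smul measurableSet_Ioo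
    (fun y hy ↦ (hasDerivAt_inv hy.1.ne').hasDerivWithinAt) inv_injective.injOn]
  simp only [abs_neg, abs_inv, abs_pow, sq_abs]

variable {E : Type*} [NormedAddCommGroup E] [NormedSpace ℂ E] {h : ℝ → E}

lemma integral_comp_sq_div_four (h : ℝ → E) :
    ∫ u in Ioi 0, h (u ^ 2 / 4) = mellin h (1 / 2) := by
  have hquarter : ((4⁻¹ : ℝ) : ℂ) ^ (-(1 / 2) : ℂ) = (2 : ℝ) := by
    have hreal : (4⁻¹ : ℝ) ^ (-(1 / 2) : ℝ) = 2 := by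
      rw [Real.inv_rpow zero_le_four, Real.rpow_neg zero_le_four, inv_inv, ← Real.sqrt_eq_rpow,
        show (4 : ℝ) = 2 ^ 2 by norm_num, Real.sqrt_sq zero_le_two]
    rw [← hreal, Complex.ofReal_cpow (by norm_num)]
    push_cast
    rfl
  calc
    ∫ u in Ioi 0, h (u ^ 2 / 4) = mellin (fun u ↦ h (4⁻¹ * u ^ (2 : ℝ))) 1 := by
      simp only [mellin, sub_self, Complex.cpow_zero, one_smul, Real.rpow_ofNat, inv_mul_eq_div]
    _ = |(2 : ℝ)|⁻¹ • ((2 : ℝ) : ℂ) • mellin h (1 / 2) := by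
      rw [mellin_comp_rpow (fun v ↦ h (4⁻¹ * v)), Complex.ofReal_ofNat,
        mellin_comp_mul_left h _ (by norm_num), hquarter, Complex.ofReal_ofNat]
    _ = mellin h (1 / 2) := by
      rw [Complex.coe_smul, abs_two, inv_smul_smul₀ two_ne_zero]

lemma integrableOn_comp_sq_div_four_iff :
    IntegrableOn (fun u ↦ h (u ^ 2 / 4)) (Ioi 0) ↔ MellinConvergent h (1 / 2) := by
  have hrpow := MellinConvergent.comp_rpow (f := fun v ↦ h (4⁻¹ * v)) (s := 1) two_ne_zero
  rw [Complex.ofReal_ofNat, MellinConvergent.comp_mul_left (by norm_num), MellinConvergent] at hrpow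
  simpa only [Real.rpow_ofNat, inv_mul_eq_div, sub_self, Complex.cpow_zero, one_smul] using hrpow

lemma log_eq_log_two_add_log_sq_div_four {u : ℝ} (hu : u ≠ 0) :
    Real.log u = Real.log 2 + 1 / 2 * Real.log (u ^ 2 / 4) := by
  rw [Real.log_div (pow_ne_zero 2 hu) four_ne_zero, Real.log_pow,
    show (4 : ℝ) = 2 ^ 2 by norm_num, Real.log_pow]
  ring

lemma integral_log_smul_comp_sq_div_four (hh : MellinConvergent h (1 / 2))
    (hlog : MellinConvergent (fun v ↦ Real.log v • h v) (1 / 2)) :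
    IntegrableOn (fun u ↦ Real.log u • h (u ^ 2 / 4)) (Ioi 0) ∧
    ∫ u in Ioi 0, Real.log u • h (u ^ 2 / 4) =
      Real.log 2 • mellin h (1 / 2) +
        (1 / 2 : ℝ) • mellin (fun v ↦ Real.log v • h v) (1 / 2) := by
  have hint := (integrableOn_comp_sq_div_four_iff.mpr hh).fun_smul (Real.log 2)
  have hlogint := (integrableOn_comp_sq_div_four_iff.mpr hlog).fun_smul (1 / 2 : ℝ)
  have hsplit : EqOn (fun u ↦ Real.log u • h (u ^ 2 / 4))
      (fun u ↦ Real.log 2 • h (u ^ 2 / 4) +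
        (1 / 2 : ℝ) • Real.log (u ^ 2 / 4) • h (u ^ 2 / 4)) (Ioi 0) := fun u hu ↦ by
    simp only [log_eq_log_two_add_log_sq_div_four (ne_of_gt hu), add_smul, mul_smul]
  refine ⟨(integrableOn_congr_fun hsplit measurableSet_Ioi).mpr (hint.add hlogint), ?_⟩
  rw [setIntegral_congr_fun measurableSet_Ioi hsplit, integral_add hint hlogint, integral_smul,
    integral_smul, integral_comp_sq_div_four h,
    integral_comp_sq_div_four fun v ↦ Real.log v • h v]

theorem tendsto_integral_tsum_comp_sq_div_add_log_smul (hh : MellinConvergent h (1 / 2))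
    (hlog : MellinConvergent (fun v ↦ Real.log v • h v) (1 / 2)) :
    Tendsto (fun ε : ℝ ↦
        (∫ y in Ioo 0 (1 / ε), (y ^ 2)⁻¹ • ∑' k : ℕ, h ((k + 1) ^ 2 / (4 * y ^ 2))) +
          Real.log ε • mellin h (1 / 2))
      (𝓝[>] 0)
      (𝓝 (Real.eulerMascheroniConstant • mellin h (1 / 2) + (Real.log 2 • mellin h (1 / 2) +
        (1 / 2 : ℝ) • mellin (fun v ↦ Real.log v • h v) (1 / 2)))) := by
  obtain ⟨hlogint, hlogval⟩ := integral_log_smul_comp_sq_div_four hh hlog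
  rw [← hlogval, ← integral_comp_sq_div_four h]
  refine (tendsto_integral_tsum_comp_mul_add_log_smul
    (integrableOn_comp_sq_div_four_iff.mpr hh) hlogint).congr' ?_
  filter_upwards [self_mem_nhdsWithin] with ε hε
  rw [← integral_Ioo_inv_sq_smul_comp_inv hε]
  simp only [← div_eq_mul_inv, div_pow, div_div, mul_comm (4 : ℝ)]

end HornTrace

section MellinSuperposition

variable {E : Type*} [NormedAddCommGroup E] [NormedSpace ℂ E] {f g : ℝ → E} {w : ℂ}

lemma hasMellin_congr {m : E} (hf : HasMellin f w m) (hfg : EqOn f g (Ioi 0)) :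
    HasMellin g w m := by
  have hsmul : EqOn (fun v : ℝ ↦ (v : ℂ) ^ (w - 1) • f v) (fun v ↦ (v : ℂ) ^ (w - 1) • g v)
      (Ioi 0) := fun v hv ↦ congrArg _ (hfg hv)
  exact ⟨hf.1.congr_fun hsmul measurableSet_Ioi,
    (setIntegral_congr_fun measurableSet_Ioi hsmul).symm.trans hf.2⟩

lemma locallyIntegrableOn_of_mellinConvergent (hf : MellinConvergent f w) :
    LocallyIntegrableOn f (Ioi 0) := by
  have hcont : ContinuousOn (fun v : ℝ ↦ (v : ℂ) ^ (1 - w)) (Ioi 0) := fun v hv ↦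
    (Complex.continuousAt_ofReal_cpow_const v _ (.inr (ne_of_gt hv))).continuousWithinAt
  refine (hf.locallyIntegrableOn.continuousOn_smul isOpen_Ioi.isLocallyClosed hcont).congr ?_
  filter_upwards [ae_restrict_mem measurableSet_Ioi] with v (hv : 0 < v)
  rw [smul_smul, ← Complex.cpow_add _ _ (Complex.ofReal_ne_zero.mpr hv.ne'),
    sub_add_sub_cancel', sub_self, Complex.cpow_zero, one_smul]

lemma integral_norm_cpow_smul_comp_mul {a : ℝ} (ha : 0 < a) (f : ℝ → E) (w : ℂ) :
    ∫ v in Ioi (0 : ℝ), ‖(v : ℂ) ^ (w - 1) • f (a * v)‖ =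
      ‖(a : ℂ) ^ (-w)‖ * ∫ v in Ioi (0 : ℝ), ‖(v : ℂ) ^ (w - 1) • f v‖ := by
  have hhom : ∀ v ∈ Ioi (0 : ℝ), ‖(v : ℂ) ^ (w - 1) • f (a * v)‖ =
      ‖(a : ℂ) ^ (1 - w)‖ * ‖((a * v : ℝ) : ℂ) ^ (w - 1) • f (a * v)‖ := fun v hv ↦ by
    rw [← norm_smul, smul_smul, Complex.ofReal_mul,
      Complex.mul_cpow_ofReal_nonneg ha.le (le_of_lt hv), ← mul_assoc,
      ← Complex.cpow_add _ _ (Complex.ofReal_ne_zero.mpr ha.ne'), sub_add_sub_cancel',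
      sub_self, Complex.cpow_zero, one_mul]
  rw [setIntegral_congr_fun measurableSet_Ioi hhom, integral_const_mul,
    integral_comp_mul_left_Ioi (fun v ↦ ‖(v : ℂ) ^ (w - 1) • f v‖) 0 ha, mul_zero, smul_eq_mul,
    ← mul_assoc, Complex.norm_cpow_eq_rpow_re_of_pos ha, Complex.norm_cpow_eq_rpow_re_of_pos ha,
    ← Real.rpow_neg_one a, ← Real.rpow_add ha, Complex.sub_re, Complex.one_re, Complex.neg_re,
    show 1 - w.re + -1 = -w.re by ring]

variable {α : Type*} [MeasurableSpace α] {μ : Measure α} {a : α → ℝ} {ρ : α → ℂ}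

lemma integrable_prod_cpow_smul_comp_mul [SFinite μ] (ha : Measurable a)
    (hpos : ∀ᵐ t ∂μ, 0 < a t) (hρ : Measurable ρ)
    (hρa : Integrable (fun t ↦ ρ t * (a t : ℂ) ^ (-w)) μ)
    (hfm : StronglyMeasurable f) (hf : MellinConvergent f w) :
    Integrable (fun p : ℝ × α ↦ (p.1 : ℂ) ^ (w - 1) • ρ p.2 • f (a p.2 * p.1))
      ((volume.restrict (Ioi 0)).prod μ) := by
  have hmeas : StronglyMeasurable
      fun p : ℝ × α ↦ (p.1 : ℂ) ^ (w - 1) • ρ p.2 • f (a p.2 * p.1) := by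
    have hcpow : Measurable fun p : ℝ × α ↦ (p.1 : ℂ) ^ (w - 1) := by fun_prop
    have hdilate : Measurable fun p : ℝ × α ↦ a p.2 * p.1 := by fun_prop
    exact hcpow.stronglyMeasurable.smul <|
      (hρ.comp measurable_snd).stronglyMeasurable.smul <| hfm.comp_measurable hdilate
  rw [integrable_prod_iff' hmeas.aestronglyMeasurable]
  simp only [smul_comm _ (ρ _), norm_smul (ρ _), integral_const_mul]
  constructor
  · filter_upwards [hpos] with t ht
    exact ((MellinConvergent.comp_mul_left ht).mpr hf).smul (ρ t)
  · refine (hρa.norm.mul_const (∫ v in Ioi (0 : ℝ), ‖(v : ℂ) ^ (w - 1) • f v‖)).congr ?_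
    filter_upwards [hpos] with t ht
    rw [integral_norm_cpow_smul_comp_mul ht, norm_mul, mul_assoc]

theorem hasMellin_integral_smul_comp_mul [CompleteSpace E] [SFinite μ] (ha : Measurable a)
    (hpos : ∀ᵐ t ∂μ, 0 < a t) (hρ : Measurable ρ)
    (hρa : Integrable (fun t ↦ ρ t * (a t : ℂ) ^ (-w)) μ)
    (hfm : StronglyMeasurable f) (hf : MellinConvergent f w) :
    HasMellin (fun v ↦ ∫ t, ρ t • f (a t * v) ∂μ) w
      ((∫ t, ρ t * (a t : ℂ) ^ (-w) ∂μ) • mellin f w) := by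
  have hprod := integrable_prod_cpow_smul_comp_mul ha hpos hρ hρa hfm hf
  rw [HasMellin, MellinConvergent, mellin]
  simp only [← integral_smul]
  refine ⟨hprod.integral_prod_left, ?_⟩
  rw [integral_integral_swap hprod, ← integral_smul_const]
  refine integral_congr_ae ?_
  filter_upwards [hpos] with t ht
  simp only [smul_comm _ (ρ t), integral_smul, mul_smul]
  rw [← mellin, mellin_comp_mul_left f w ht, mellin]

end MellinSuperposition

section BetaIntegral

lemma image_div_one_sub_Ioo : (fun x : ℝ ↦ x / (1 - x)) '' Ioo 0 1 = Ioi 0 := by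
  ext v
  constructor
  · rintro ⟨x, ⟨hx0, hx1⟩, rfl⟩
    exact div_pos hx0 (sub_pos.mpr hx1)
  · intro (hv : 0 < v)
    have hadd : 0 < 1 + v := by positivity
    refine ⟨v / (1 + v), ⟨by positivity, (div_lt_one hadd).mpr (lt_one_add v)⟩, ?_⟩
    field_simp
    ring

lemma injOn_div_one_sub_Ioo : InjOn (fun x : ℝ ↦ x / (1 - x)) (Ioo 0 1) := by
  intro x hx y hy hxy
  have hx1 : 1 - x ≠ 0 := (sub_pos.mpr hx.2).ne'
  have hy1 : 1 - y ≠ 0 := (sub_pos.mpr hy.2).ne'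
  field_simp at hxy
  linarith

lemma hasDerivAt_div_one_sub {x : ℝ} (hx : 1 - x ≠ 0) :
    HasDerivAt (fun x : ℝ ↦ x / (1 - x)) (1 / (1 - x) ^ 2) x := by
  refine ((hasDerivAt_id x).div ((hasDerivAt_id x).const_sub 1) hx).congr_deriv ?_
  simp only [id_eq, one_mul, mul_neg_one, sub_neg_eq_add, sub_add_cancel]

lemma inv_ofReal_cpow_neg {a : ℝ} (ha : 0 ≤ a) (w : ℂ) :
    ((a⁻¹ : ℝ) : ℂ) ^ (-w) = (a : ℂ) ^ w := by
  rw [Complex.ofReal_inv, Complex.inv_cpow _ _ (Complex.arg_ofReal_of_nonneg ha ▸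
    Real.pi_pos.ne), Complex.cpow_neg, inv_inv]

lemma ofReal_one_sub (x : ℝ) : ((1 - x : ℝ) : ℂ) = 1 - (x : ℂ) := by
  rw [Complex.ofReal_sub, Complex.ofReal_one]

lemma betaIntegrand_eq_comp_div_one_sub {w s : ℂ} {x : ℝ} (hx : x ∈ Ioo 0 1) :
    |1 / (1 - x) ^ 2| •
        (((x / (1 - x) : ℝ) : ℂ) ^ (w - 1) • ((1 + x / (1 - x) : ℝ) : ℂ) ^ (-s)) =
      (x : ℂ) ^ (w - 1) * (1 - (x : ℂ)) ^ (s - w - 1) := by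
  have hsub : 0 < 1 - x := sub_pos.mpr hx.2
  have hne : ((1 - x : ℝ) : ℂ) ≠ 0 := Complex.ofReal_ne_zero.mpr hsub.ne'
  have hadd : 1 + x / (1 - x) = (1 - x)⁻¹ := by field_simp; ring
  have hcpow : ((1 - x : ℝ) : ℂ) ^ (s - w - 1) =
      ((1 - x : ℝ) : ℂ) ^ (-(2 : ℂ)) * ((1 - x : ℝ) : ℂ) ^ (-(w - 1)) *
        ((1 - x : ℝ) : ℂ) ^ s := by
    rw [← Complex.cpow_add _ _ hne, ← Complex.cpow_add _ _ hne]
    ring_nf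
  have hinv : (((1 - x)⁻¹ : ℝ) : ℂ) ^ (w - 1) = ((1 - x : ℝ) : ℂ) ^ (-(w - 1)) := by
    rw [← inv_ofReal_cpow_neg hsub.le, neg_neg]
  rw [hadd, abs_of_pos (by positivity), div_eq_mul_inv x, Complex.ofReal_mul,
    Complex.mul_cpow_ofReal_nonneg hx.1.le (inv_pos.mpr hsub).le, inv_ofReal_cpow_neg hsub.le,
    hinv, ← ofReal_one_sub, hcpow, Complex.cpow_neg _ 2,
    Complex.cpow_ofNat, Complex.real_smul, smul_eq_mul]
  push_cast
  ring

lemma betaIntegral_eq_setIntegral_Ioo (u v : ℂ) :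
    Complex.betaIntegral u v =
      ∫ x in Ioo (0 : ℝ) 1, (x : ℂ) ^ (u - 1) * (1 - (x : ℂ)) ^ (v - 1) := by
  rw [Complex.betaIntegral, intervalIntegral.integral_of_le zero_le_one,
    integral_Ioc_eq_integral_Ioo]

lemma integrableOn_betaIntegrand {u v : ℂ} (hu : 0 < u.re) (hv : 0 < v.re) :
    IntegrableOn (fun x : ℝ ↦ (x : ℂ) ^ (u - 1) * (1 - (x : ℂ)) ^ (v - 1)) (Ioo 0 1) :=
  (intervalIntegrable_iff_integrableOn_Ioo_of_le zero_le_one).mp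
    (Complex.betaIntegral_convergent hu hv)

theorem hasMellin_one_add_cpow_neg {w s : ℂ} (hw : 0 < w.re) (hws : w.re < s.re) :
    HasMellin (fun v : ℝ ↦ ((1 + v : ℝ) : ℂ) ^ (-s)) w (Complex.betaIntegral w (s - w)) := by
  have hderiv : ∀ x ∈ Ioo (0 : ℝ) 1,
      HasDerivWithinAt (fun x ↦ x / (1 - x)) (1 / (1 - x) ^ 2) (Ioo 0 1) x := fun x hx ↦
    (hasDerivAt_div_one_sub (sub_pos.mpr hx.2).ne').hasDerivWithinAt
  have hintegrand : EqOn _ _ (Ioo (0 : ℝ) 1) := fun x hx ↦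
    betaIntegrand_eq_comp_div_one_sub (w := w) (s := s) hx
  constructor
  · rw [MellinConvergent, ← image_div_one_sub_Ioo,
      integrableOn_image_iff_integrableOn_abs_deriv_smul measurableSet_Ioo hderiv
        injOn_div_one_sub_Ioo, integrableOn_congr_fun hintegrand measurableSet_Ioo]
    exact integrableOn_betaIntegrand hw (by rwa [Complex.sub_re, sub_pos])
  · rw [mellin, ← image_div_one_sub_Ioo,
      integral_image_eq_integral_abs_deriv_smul measurableSet_Ioo hderiv injOn_div_one_sub_Ioo,
      setIntegral_congr_fun measurableSet_Ioo hintegrand, betaIntegral_eq_setIntegral_Ioo]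

end BetaIntegral

section GreenMellin

/-- The density for which `greenH s (1 + v)` is, up to the factor `1 / (4π)`, the superposition
over `t ∈ (0, 1)` of the functions `v ↦ (1 + (1 - t)⁻¹ v) ^ (-s)`. It is obtained by pulling
`(1 - t) ^ (-s)` out of `(1 + v - t) ^ (-s)`. -/
noncomputable def greenDensity (s : ℂ) (t : ℝ) : ℂ := (t : ℂ) ^ (s - 1) * (1 - (t : ℂ))⁻¹

variable {s w : ℂ}

lemma measurable_greenDensity : Measurable (greenDensity s) := by
  unfold greenDensity
  fun_prop

lemma greenH_one_add {v : ℝ} (hv : 0 < v) :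
    greenH s (1 + v) = 1 / (4 * (Real.pi : ℂ)) *
      ∫ t in Ioo (0 : ℝ) 1, greenDensity s t * ((1 + (1 - t)⁻¹ * v : ℝ) : ℂ) ^ (-s) := by
  rw [greenH]
  congr 1
  refine setIntegral_congr_fun measurableSet_Ioo fun t ht ↦ ?_
  have hsub : 0 < 1 - t := sub_pos.mpr ht.2
  have hne : ((1 - t : ℝ) : ℂ) ≠ 0 := Complex.ofReal_ne_zero.mpr hsub.ne'
  have hfactor : ((1 + v : ℝ) : ℂ) - t = (1 - t : ℝ) * (1 + (1 - t)⁻¹ * v : ℝ) := by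
    rw [← Complex.ofReal_mul, ← Complex.ofReal_sub, mul_add, mul_inv_cancel_left₀ hsub.ne']
    ring_nf
  have hcpow : ((1 - t : ℝ) : ℂ) ^ (s - 1) * ((1 - t : ℝ) : ℂ) ^ (-s) = ((1 - t : ℝ) : ℂ)⁻¹ := by
    rw [← Complex.cpow_add _ _ hne, ← Complex.cpow_neg_one]
    ring_nf
  simp only [greenDensity]
  rw [hfactor, Complex.mul_cpow_ofReal_nonneg hsub.le (by positivity), ← ofReal_one_sub, ← hcpow]
  ring

lemma greenDensity_mul_cpow_neg {t : ℝ} (ht : t ∈ Ioo 0 1) :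
    greenDensity s t * (((1 - t)⁻¹ : ℝ) : ℂ) ^ (-w) =
      (t : ℂ) ^ (s - 1) * (1 - (t : ℂ)) ^ (w - 1) := by
  have hsub : 0 < 1 - t := sub_pos.mpr ht.2
  rw [greenDensity, inv_ofReal_cpow_neg hsub.le, ← ofReal_one_sub,
    Complex.cpow_sub _ _ (Complex.ofReal_ne_zero.mpr hsub.ne'), Complex.cpow_one, mul_assoc,
    div_eq_inv_mul]

lemma integrableOn_greenDensity_mul_cpow_neg (hs : 0 < s.re) (hw : 0 < w.re) :
    IntegrableOn (fun t ↦ greenDensity s t * (((1 - t)⁻¹ : ℝ) : ℂ) ^ (-w)) (Ioo 0 1) :=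
  (integrableOn_betaIntegrand hs hw).congr_fun (fun _ ht ↦ (greenDensity_mul_cpow_neg ht).symm)
    measurableSet_Ioo

lemma integral_greenDensity_mul_cpow_neg :
    ∫ t in Ioo 0 1, greenDensity s t * (((1 - t)⁻¹ : ℝ) : ℂ) ^ (-w) =
      Complex.betaIntegral s w := by
  rw [betaIntegral_eq_setIntegral_Ioo]
  exact setIntegral_congr_fun measurableSet_Ioo fun t ht ↦ greenDensity_mul_cpow_neg ht

theorem hasMellin_greenH_one_add (hw : 0 < w.re) (hws : w.re < s.re) :
    HasMellin (fun v ↦ greenH s (1 + v)) w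
      (1 / (4 * (Real.pi : ℂ)) * (Complex.betaIntegral s w * Complex.betaIntegral w (s - w))) := by
  have hkernel := hasMellin_one_add_cpow_neg hw hws
  have hsuper := hasMellin_integral_smul_comp_mul (a := fun t ↦ (1 - t)⁻¹)
    (measurable_const.sub measurable_id).inv
    ((ae_restrict_mem measurableSet_Ioo).mono fun t ht ↦ inv_pos.mpr (sub_pos.mpr ht.2))
    measurable_greenDensity (integrableOn_greenDensity_mul_cpow_neg (hw.trans hws) hw)
    (by fun_prop : Measurable fun v : ℝ ↦ ((1 + v : ℝ) : ℂ) ^ (-s)).stronglyMeasurable hkernel.1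
  rw [integral_greenDensity_mul_cpow_neg, hkernel.2] at hsuper
  have hscaled := hasMellin_const_smul hsuper.1 (1 / (4 * (Real.pi : ℂ)))
  rw [hsuper.2] at hscaled
  exact hasMellin_congr hscaled fun v hv ↦ (greenH_one_add hv).symm

lemma hasMellin_greenH_one_add_Gamma (hw : 0 < w.re) (hws : w.re < s.re) :
    HasMellin (fun v ↦ greenH s (1 + v)) w
      (1 / (4 * (Real.pi : ℂ)) *
        (Complex.Gamma w ^ 2 * Complex.Gamma (s - w) / Complex.Gamma (s + w))) := by
  have hs : 0 < s.re := hw.trans hws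
  have hGamma : Complex.Gamma s ≠ 0 := Complex.Gamma_ne_zero_of_re_pos hs
  convert hasMellin_greenH_one_add hw hws using 2
  rw [Complex.betaIntegral_eq_Gamma_mul_div _ _ hs hw,
    Complex.betaIntegral_eq_Gamma_mul_div _ _ hw (by rwa [Complex.sub_re, sub_pos]),
    add_sub_cancel]
  field_simp

lemma norm_one_add_cpow_neg_le {δ v : ℝ} (hδ : 0 ≤ δ) (hδs : δ ≤ s.re) (hv : 0 < v) :
    ‖((1 + v : ℝ) : ℂ) ^ (-s)‖ ≤ v ^ (-δ) := by
  have hadd : 0 < 1 + v := by positivity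
  rw [Complex.norm_cpow_eq_rpow_re_of_pos hadd, Complex.neg_re]
  calc
    (1 + v) ^ (-s.re) ≤ (1 + v) ^ (-δ) :=
      Real.rpow_le_rpow_of_exponent_le (by linarith) (neg_le_neg hδs)
    _ ≤ v ^ (-δ) := Real.rpow_le_rpow_of_nonpos hv (by linarith) (neg_nonpos.mpr hδ)

lemma exists_norm_greenH_one_add_le {δ : ℝ} (hδ : 0 < δ) (hδs : δ ≤ s.re) :
    ∃ C : ℝ, ∀ v : ℝ, 0 < v → ‖greenH s (1 + v)‖ ≤ C * v ^ (-δ) := by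
  refine ⟨‖1 / (4 * (Real.pi : ℂ))‖ *
    ∫ t in Ioo 0 1, ‖greenDensity s t * (((1 - t)⁻¹ : ℝ) : ℂ) ^ (-(δ : ℂ))‖, fun v hv ↦ ?_⟩
  rw [greenH_one_add hv, norm_mul, mul_assoc, ← integral_mul_const]
  gcongr
  refine norm_integral_le_of_norm_le
    ((integrableOn_greenDensity_mul_cpow_neg (hδ.trans_le hδs) hδ).norm.mul_const _) ?_
  filter_upwards [ae_restrict_mem measurableSet_Ioo] with t ht
  have hinv : 0 < (1 - t)⁻¹ := inv_pos.mpr (sub_pos.mpr ht.2)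
  rw [norm_mul, norm_mul, mul_assoc, Complex.norm_cpow_eq_rpow_re_of_pos hinv, Complex.neg_re,
    Complex.ofReal_re, ← Real.mul_rpow hinv.le hv.le]
  gcongr
  exact norm_one_add_cpow_neg_le hδ.le hδs (mul_pos hinv hv)

theorem hasDerivAt_mellin_greenH_one_add (hw : 0 < w.re) (hws : w.re < s.re) :
    MellinConvergent (fun v ↦ Real.log v • greenH s (1 + v)) w ∧
      HasDerivAt (mellin fun v ↦ greenH s (1 + v))
        (mellin (fun v ↦ Real.log v • greenH s (1 + v)) w) w := by
  obtain ⟨C, hC⟩ := exists_norm_greenH_one_add_le (hw.trans hws) le_rfl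
  obtain ⟨C', hC'⟩ := exists_norm_greenH_one_add_le (half_pos hw)
    ((half_lt_self hw).trans hws).le
  refine mellin_hasDerivAt_of_isBigO_rpow
    (locallyIntegrableOn_of_mellinConvergent (hasMellin_greenH_one_add hw hws).1)
    (.of_bound C ?_) hws (.of_bound C' ?_) (half_lt_self hw)
  · filter_upwards [eventually_gt_atTop 0] with v hv
    rw [Real.norm_of_nonneg (Real.rpow_nonneg hv.le _)]
    exact hC v hv
  · filter_upwards [self_mem_nhdsWithin] with v (hv : 0 < v)
    rw [Real.norm_of_nonneg (Real.rpow_nonneg hv.le _)]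
    exact hC' v hv

end GreenMellin

section LogMoment

lemma hasDerivAt_Gamma_of_re_pos {z : ℂ} (hz : 0 < z.re) :
    HasDerivAt Complex.Gamma (Complex.Gamma z * Complex.digamma z) z := by
  have hne : ∀ m : ℕ, z ≠ -m := by
    rintro m rfl
    rw [Complex.neg_re, Complex.natCast_re] at hz
    linarith [m.cast_nonneg (α := ℝ)]
  rw [Complex.digamma_def, logDeriv_apply, mul_div_cancel₀ _ (Complex.Gamma_ne_zero_of_re_pos hz)]
  exact (Complex.differentiableAt_Gamma z hne).hasDerivAt

variable {s w : ℂ}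

lemma hasDerivAt_Gamma_sq_mul_Gamma_div_Gamma (hw : 0 < w.re) (hws : w.re < s.re) :
    HasDerivAt
      (fun z ↦ Complex.Gamma z ^ 2 * Complex.Gamma (s - z) / Complex.Gamma (s + z))
      (Complex.Gamma w ^ 2 * Complex.Gamma (s - w) / Complex.Gamma (s + w) *
        (2 * Complex.digamma w - Complex.digamma (s - w) - Complex.digamma (s + w))) w := by
  have hadd : 0 < (s + w).re := by rw [Complex.add_re]; linarith
  have hsub : 0 < (s - w).re := by rwa [Complex.sub_re, sub_pos]
  have hGamma : Complex.Gamma (s + w) ≠ 0 := Complex.Gamma_ne_zero_of_re_pos hadd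
  convert! (((hasDerivAt_Gamma_of_re_pos hw).pow 2).mul
    ((hasDerivAt_Gamma_of_re_pos hsub).comp_const_sub s w)).div
    ((hasDerivAt_Gamma_of_re_pos hadd).comp_const_add s w) hGamma using 1
  simp only [Pi.mul_apply, Pi.pow_apply]
  field_simp
  ring

lemma hasMellin_log_smul_greenH_one_add (hw : 0 < w.re) (hws : w.re < s.re) :
    HasMellin (fun v ↦ Real.log v • greenH s (1 + v)) w
      (mellin (fun v ↦ greenH s (1 + v)) w *
        (2 * Complex.digamma w - Complex.digamma (s - w) - Complex.digamma (s + w))) := by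
  obtain ⟨hconv, hderiv⟩ := hasDerivAt_mellin_greenH_one_add hw hws
  refine ⟨hconv, ?_⟩
  have hnear : ∀ᶠ z : ℂ in 𝓝 w, 0 < z.re ∧ z.re < s.re :=
    Complex.continuous_re.continuousAt.eventually (Ioo_mem_nhds hw hws)
  have hGamma := ((hasDerivAt_Gamma_sq_mul_Gamma_div_Gamma hw hws).const_mul
    (1 / (4 * (Real.pi : ℂ)))).congr_of_eventuallyEq
      (hnear.mono fun z hz ↦ (hasMellin_greenH_one_add_Gamma hz.1 hz.2).2)
  rw [hderiv.unique hGamma, (hasMellin_greenH_one_add_Gamma hw hws).2, mul_assoc]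

lemma hasMellin_greenH_one_add_half (hs : 1 / 2 < s.re) :
    HasMellin (fun v ↦ greenH s (1 + v)) (1 / 2) (1 / (2 * (2 * s - 1))) := by
  have hre : ((1 : ℂ) / 2).re = 1 / 2 := by norm_num
  have hsub : 0 < (s - 1 / 2).re := by rw [Complex.sub_re, hre]; linarith
  have hne : s - 1 / 2 ≠ 0 := Complex.ne_zero_of_re_pos hsub
  have hGamma : Complex.Gamma (s - 1 / 2) ≠ 0 := Complex.Gamma_ne_zero_of_re_pos hsub
  have hpi : (Real.pi : ℂ) ≠ 0 := Complex.ofReal_ne_zero.mpr Real.pi_ne_zero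
  have hsq : Complex.Gamma (1 / 2) ^ 2 = Real.pi := by
    rw [Complex.Gamma_one_half_eq, one_div, Complex.cpow_ofNat_inv_pow]
  have hshift : Complex.Gamma (s + 1 / 2) = (s - 1 / 2) * Complex.Gamma (s - 1 / 2) := by
    rw [← Complex.Gamma_add_one _ hne]
    ring_nf
  convert hasMellin_greenH_one_add_Gamma (s := s) (w := 1 / 2) (by norm_num) (by rwa [hre]) using 1
  rw [hsq, hshift, show 2 * s - 1 = 2 * (s - 1 / 2) by ring]
  generalize s - 1 / 2 = r at hne hGamma ⊢
  field_simp
  norm_num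

lemma digamma_sub_one_half (hs : 1 / 2 < s.re) :
    Complex.digamma (s - 1 / 2) = Complex.digamma (s + 1 / 2) - (s - 1 / 2)⁻¹ := by
  have hne : ∀ m : ℕ, s - 1 / 2 ≠ -m := fun m hm ↦ by
    have hre : s.re - 1 / 2 = -(m : ℝ) := by simpa using congrArg Complex.re hm
    linarith [m.cast_nonneg (α := ℝ)]
  rw [show s + 1 / 2 = s - 1 / 2 + 1 by ring, Complex.digamma_apply_add_one _ hne,
    add_sub_cancel_right]

lemma hasMellin_log_smul_greenH_one_add_half (hs : 1 / 2 < s.re) :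
    HasMellin (fun v ↦ Real.log v • greenH s (1 + v)) (1 / 2)
      (1 / (2 * (2 * s - 1)) * (2 * (-2 * Real.log 2 - Real.eulerMascheroniConstant -
        digamma (s + 1 / 2) + 1 / (2 * s - 1)))) := by
  have hlog : (Real.log 2 : ℂ) = Complex.log 2 := Complex.ofReal_log zero_le_two
  have hdigamma : digamma = Complex.digamma := rfl
  convert hasMellin_log_smul_greenH_one_add (s := s) (w := 1 / 2) (by norm_num)
    (by norm_num; linarith) using 1
  rw [(hasMellin_greenH_one_add_half hs).2, Complex.digamma_one_half, digamma_sub_one_half hs,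
    hdigamma, hlog, show s - 1 / 2 = (2 * s - 1) / 2 by ring, inv_div]
  ring

end LogMoment

end

/-- Proposition 2.4 of the paper: the regularized resolvent trace of the parabolic
cylinder (horn) `H = Γ_∞\ℍ`.  For `Re s > 1/2`,
`lim_{ε→0⁺} [2(2s-1) ∫₀^{1/ε} (∑_{k=1}^∞ g_s(1+k²/(4y²))) y⁻² dy + log ε]
  = -log 2 - Ψ(s+1/2) + 1/(2s-1)`. -/
theorem horn_regularized_trace (s : ℂ) (hs : 1 / 2 < s.re) :
    Filter.Tendsto
      (fun ε : ℝ =>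
        2 * (2 * s - 1) * (∫ y in Set.Ioo (0:ℝ) (1/ε),
            (∑' k : ℕ, greenH s (1 + ((k : ℝ) + 1) ^ 2 / (4 * y ^ 2))) / (y : ℂ) ^ 2)
          + (Real.log ε : ℂ))
      (nhdsWithin 0 (Set.Ioi 0))
      (nhds (-(Real.log 2 : ℂ) - digamma (s + 1 / 2) + 1 / (2 * s - 1))) := by
  have hgreen := hasMellin_greenH_one_add_half hs
  have hlog := hasMellin_log_smul_greenH_one_add_half hs
  have hlim := (tendsto_integral_tsum_comp_sq_div_add_log_smul hgreen.1 hlog.1).const_mul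
    (2 * (2 * s - 1))
  rw [hgreen.2, hlog.2] at hlim
  have hne : 2 * s - 1 ≠ 0 := Complex.ne_zero_of_re_pos (by simpa using by linarith)
  convert hlim using 2 with ε
  · simp only [Complex.real_smul, Complex.ofReal_inv, Complex.ofReal_pow, div_eq_inv_mul]
    field_simp
  · simp only [Complex.real_smul]
    push_cast
    generalize 2 * s - 1 = c at hne ⊢
    field_simp
    ring
end

section
/- Let s be a complex number with Re(s) > 1/2. Then ((2s−1)/(4π)) ∫₀¹ ∫₀¹ t^{s−1} (1−t)^{−1/2} w^{s−3/2} (1−w)^{−1/2} log( (1−t)(1−w)/w ) dw dt = −γ − log 4 − Ψ(s + 1/2) + 1/(2s−1). -/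
open MeasureTheory

/-!
The logarithm splits as `log (1 - t) + (log (1 - w) - log w)`, so the double integral reduces to
products of single integrals of the Beta density against `1`, `log x` and `log (1 - x)`. The
integral against `log x` is `∂B/∂u (u, v)`, obtained by viewing `B(·, v)` as the Mellin transform of
`(1 - x) ^ (v - 1)` on `(0, 1]`; since `B(u, v) = Γ(u) Γ(v) / Γ(u + v)`, it equals
`B(u, v) (Ψ(u) - Ψ(u + v))`. The reflection `x ↦ 1 - x` gives the integral against `log (1 - x)`.
In the `w`-integral the terms `Ψ(u + v)` cancel, and the two Beta factors telescope to
`B(s - 1/2, 1/2) B(s, 1/2) = π / (s - 1/2)`.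
-/

open Set Filter Asymptotics Topology
open Complex (betaIntegral Gamma)

section Mellin

variable {E : Type*} [NormedAddCommGroup E]

theorem locallyIntegrableOn_indicator_Ioc {f : ℝ → E} {a b : ℝ}
    (hf : LocallyIntegrableOn f (Ioc a b)) :
    LocallyIntegrableOn ((Ioc a b).indicator f) (Ioi a) := by
  rw [locallyIntegrableOn_iff isLocallyClosed_Ioc] at hf
  rw [locallyIntegrableOn_iff isOpen_Ioi.isLocallyClosed]
  intro k hk hkc
  rw [integrableOn_indicator_iff measurableSet_Ioc]
  have hinter : Ioc a b ∩ k = k ∩ Iic b := by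
    ext x
    exact ⟨fun h ↦ ⟨h.2, h.1.2⟩, fun h ↦ ⟨⟨hk h.1, h.2⟩, h.1⟩⟩
  exact hf _ inter_subset_left (hinter ▸ hkc.inter_right isClosed_Iic)

variable [NormedSpace ℂ E]

theorem mellinConvergent_indicator_Ioc_iff {a : ℝ} (ha : 0 ≤ a) (f : ℝ → E) (s : ℂ) :
    MellinConvergent ((Ioc 0 a).indicator f) s ↔
      IntervalIntegrable (fun x : ℝ ↦ (x : ℂ) ^ (s - 1) • f x) volume 0 a := by
  simp_rw [MellinConvergent, ← indicator_smul]
  rw [integrableOn_indicator_iff measurableSet_Ioc, inter_eq_left.2 Ioc_subset_Ioi_self,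
    intervalIntegrable_iff_integrableOn_Ioc_of_le ha]

theorem mellin_indicator_Ioc {a : ℝ} (ha : 0 ≤ a) (f : ℝ → E) (s : ℂ) :
    mellin ((Ioc 0 a).indicator f) s = ∫ x in 0..a, (x : ℂ) ^ (s - 1) • f x := by
  simp_rw [mellin, ← indicator_smul]
  rw [setIntegral_indicator measurableSet_Ioc, inter_eq_right.2 Ioc_subset_Ioi_self,
    intervalIntegral.integral_of_le ha]

theorem hasDerivAt_integral_cpow_smul {f : ℝ → E} {a b : ℝ} {s : ℂ} (ha : 0 ≤ a)
    (hf : LocallyIntegrableOn f (Ioc 0 a)) (hf0 : f =O[𝓝[>] 0] (· ^ (-b))) (hs : b < s.re) :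
    IntervalIntegrable (fun x : ℝ ↦ (x : ℂ) ^ (s - 1) • Real.log x • f x) volume 0 a ∧
      HasDerivAt (fun z : ℂ ↦ ∫ x in 0..a, (x : ℂ) ^ (z - 1) • f x)
        (∫ x in 0..a, (x : ℂ) ^ (s - 1) • Real.log x • f x) s := by
  have htop : (Ioc 0 a).indicator f =O[atTop] (· ^ (-(s.re + 1))) := by
    refine EventuallyEq.trans_isBigO ?_ (isBigO_zero _ _)
    filter_upwards [eventually_gt_atTop a] with x hx
    exact indicator_of_notMem (fun h ↦ hx.not_ge h.2) f
  have hbot : (Ioc 0 a).indicator f =O[𝓝[>] 0] (· ^ (-b)) :=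
    (isBigO_of_le _ fun _ ↦ norm_indicator_le_norm_self _ _).trans hf0
  have key := mellin_hasDerivAt_of_isBigO_rpow (locallyIntegrableOn_indicator_Ioc hf)
    htop (lt_add_one s.re) hbot hs
  simp_rw [← indicator_smul, mellinConvergent_indicator_Ioc_iff ha, mellin_indicator_Ioc ha]
    at key
  rwa [funext (mellin_indicator_Ioc ha f)] at key

end Mellin

section BetaLog

variable {u v : ℂ}

/-- The Beta density `x ^ (u - 1) (1 - x) ^ (v - 1)`, i.e. the integrand of
`Complex.betaIntegral`. -/
noncomputable def betaIntegrand (u v : ℂ) (x : ℝ) : ℂ :=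
  (x : ℂ) ^ (u - 1) * (1 - (x : ℂ)) ^ (v - 1)

theorem betaIntegrand_one_sub (u v : ℂ) (x : ℝ) :
    betaIntegrand u v (1 - x) = betaIntegrand v u x := by
  simp [betaIntegrand, mul_comm]

theorem intervalIntegrable_betaIntegrand (hu : 0 < u.re) (hv : 0 < v.re) :
    IntervalIntegrable (betaIntegrand u v) volume 0 1 :=
  Complex.betaIntegral_convergent hu hv

theorem integral_betaIntegrand (u v : ℂ) :
    ∫ x in 0..1, betaIntegrand u v x = betaIntegral u v := rfl

theorem hasDerivAt_betaIntegral_integral_log (hu : 0 < u.re) (hv : 0 < v.re) :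
    IntervalIntegrable (fun x ↦ betaIntegrand u v x * Real.log x) volume 0 1 ∧
      HasDerivAt (betaIntegral · v) (∫ x in 0..1, betaIntegrand u v x * Real.log x) u := by
  have hint : IntegrableOn (fun x : ℝ ↦ (1 - (x : ℂ)) ^ (v - 1)) (Ioc 0 1) := by
    simpa [intervalIntegrable_iff_integrableOn_Ioc_of_le] using
      Complex.betaIntegral_convergent (u := 1) (by simp) hv
  have hzero : (fun x : ℝ ↦ (1 - (x : ℂ)) ^ (v - 1)) =O[𝓝[>] 0] (· ^ (-(0 : ℝ))) := by
    have hcont : ContinuousAt (fun x : ℝ ↦ (1 - (x : ℂ)) ^ (v - 1)) 0 :=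
      ContinuousAt.cpow (by fun_prop) (by fun_prop) (by simp)
    simpa using (hcont.tendsto.isBigO_one ℝ).mono nhdsWithin_le_nhds
  have key := hasDerivAt_integral_cpow_smul zero_le_one hint.locallyIntegrableOn hzero hu
  have hlog (x : ℝ) : (x : ℂ) ^ (u - 1) • Real.log x • (1 - (x : ℂ)) ^ (v - 1) =
      betaIntegrand u v x * Real.log x := by
    simp only [betaIntegrand, smul_eq_mul, Complex.real_smul]
    ring
  simp only [hlog] at key
  exact key

theorem ne_neg_natCast_of_re_pos (hu : 0 < u.re) (m : ℕ) : u ≠ -m := by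
  rintro rfl
  simp [(Nat.cast_nonneg m).not_gt] at hu

theorem hasDerivAt_betaIntegral_digamma (hu : 0 < u.re) (hv : 0 < v.re) :
    HasDerivAt (betaIntegral · v)
      (betaIntegral u v * (Complex.digamma u - Complex.digamma (u + v))) u := by
  have huv : 0 < (u + v).re := add_pos hu hv
  have hGu := (Complex.differentiableAt_Gamma u (ne_neg_natCast_of_re_pos hu)).hasDerivAt
  have hGuv := (Complex.differentiableAt_Gamma _ (ne_neg_natCast_of_re_pos huv)).hasDerivAt
  have hGu0 := Complex.Gamma_ne_zero_of_re_pos hu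
  have hGuv0 := Complex.Gamma_ne_zero_of_re_pos huv
  have hquot := (hGu.mul_const (Gamma v)).div (hGuv.comp_add_const u v) hGuv0
  have hev : (betaIntegral · v) =ᶠ[𝓝 u] fun z ↦ Gamma z * Gamma v / Gamma (z + v) := by
    filter_upwards [(isOpen_lt continuous_const Complex.continuous_re).mem_nhds hu] with z hz
    exact Complex.betaIntegral_eq_Gamma_mul_div z v hz hv
  refine (hquot.congr_of_eventuallyEq hev).congr_deriv ?_
  rw [Complex.betaIntegral_eq_Gamma_mul_div u v hu hv, Complex.digamma_def, logDeriv_apply,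
    logDeriv_apply]
  field_simp

theorem intervalIntegrable_betaIntegrand_mul_log (hu : 0 < u.re) (hv : 0 < v.re) :
    IntervalIntegrable (fun x ↦ betaIntegrand u v x * Real.log x) volume 0 1 :=
  (hasDerivAt_betaIntegral_integral_log hu hv).1

theorem integral_betaIntegrand_mul_log (hu : 0 < u.re) (hv : 0 < v.re) :
    ∫ x in 0..1, betaIntegrand u v x * Real.log x =
      betaIntegral u v * (Complex.digamma u - Complex.digamma (u + v)) :=
  (hasDerivAt_betaIntegral_integral_log hu hv).2.unique (hasDerivAt_betaIntegral_digamma hu hv)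

theorem intervalIntegrable_betaIntegrand_mul_log_one_sub (hu : 0 < u.re) (hv : 0 < v.re) :
    IntervalIntegrable (fun x ↦ betaIntegrand u v x * Real.log (1 - x)) volume 0 1 := by
  simpa [betaIntegrand_one_sub] using
    ((intervalIntegrable_betaIntegrand_mul_log hv hu).comp_sub_left 1).symm

theorem integral_betaIntegrand_mul_log_one_sub (hu : 0 < u.re) (hv : 0 < v.re) :
    ∫ x in 0..1, betaIntegrand u v x * Real.log (1 - x) =
      betaIntegral u v * (Complex.digamma v - Complex.digamma (u + v)) := by
  have hreflect := intervalIntegral.integral_comp_sub_left (a := 0) (b := 1)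
    (fun x : ℝ ↦ betaIntegrand v u x * Real.log x) 1
  simp only [betaIntegrand_one_sub, sub_self, sub_zero] at hreflect
  rw [hreflect, integral_betaIntegrand_mul_log hv hu, Complex.betaIntegral_symm, add_comm v u]

theorem intervalIntegrable_betaIntegrand_mul_log_sub_log (hu : 0 < u.re) (hv : 0 < v.re) :
    IntervalIntegrable (fun x ↦ betaIntegrand u v x * (Real.log (1 - x) - Real.log x))
      volume 0 1 := by
  simpa only [mul_sub] using (intervalIntegrable_betaIntegrand_mul_log_one_sub hu hv).sub
    (intervalIntegrable_betaIntegrand_mul_log hu hv)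

theorem integral_betaIntegrand_mul_log_sub_log (hu : 0 < u.re) (hv : 0 < v.re) :
    ∫ x in 0..1, betaIntegrand u v x * (Real.log (1 - x) - Real.log x) =
      betaIntegral u v * (Complex.digamma v - Complex.digamma u) := by
  simp only [mul_sub]
  rw [intervalIntegral.integral_sub (intervalIntegrable_betaIntegrand_mul_log_one_sub hu hv)
      (intervalIntegrable_betaIntegrand_mul_log hu hv),
    integral_betaIntegrand_mul_log_one_sub hu hv, integral_betaIntegrand_mul_log hu hv]
  ring

end BetaLog

theorem integral_integral_mul_mul_add {α β 𝕜 : Type*} [MeasurableSpace α] [MeasurableSpace β]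
    [RCLike 𝕜] {μ : Measure α} {ν : Measure β} {f p : α → 𝕜} {g q : β → 𝕜}
    (hf : Integrable f μ) (hfp : Integrable (fun x ↦ f x * p x) μ)
    (hg : Integrable g ν) (hgq : Integrable (fun y ↦ g y * q y) ν) :
    ∫ x, ∫ y, f x * g y * (p x + q y) ∂ν ∂μ =
      (∫ x, f x * p x ∂μ) * (∫ y, g y ∂ν) + (∫ x, f x ∂μ) * ∫ y, g y * q y ∂ν := by
  have hinner (x : α) : ∫ y, f x * g y * (p x + q y) ∂ν =
      f x * p x * ∫ y, g y ∂ν + f x * ∫ y, g y * q y ∂ν := by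
    rw [← integral_const_mul, ← integral_const_mul,
      ← integral_add (hg.const_mul _) (hgq.const_mul _)]
    congr with y
    ring
  simp_rw [hinner]
  rw [integral_add (hfp.mul_const _) (hf.mul_const _), integral_mul_const, integral_mul_const]

theorem log_one_sub_mul_one_sub_div {t w : ℝ} (ht : t < 1) (hw : w ∈ Ioo (0 : ℝ) 1) :
    Real.log ((1 - t) * (1 - w) / w) =
      Real.log (1 - t) + (Real.log (1 - w) - Real.log w) := by
  have ht' : 1 - t ≠ 0 := (sub_pos.2 ht).ne'
  have hw' : 1 - w ≠ 0 := (sub_pos.2 hw.2).ne'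
  rw [Real.log_div (mul_ne_zero ht' hw') hw.1.ne', Real.log_mul ht' hw', add_sub_assoc]

theorem integral_integral_betaIntegrand_mul_log {a b c d : ℂ} (ha : 0 < a.re) (hb : 0 < b.re)
    (hc : 0 < c.re) (hd : 0 < d.re) :
    ∫ t in Ioo (0 : ℝ) 1, ∫ w in Ioo (0 : ℝ) 1,
        betaIntegrand a b t * betaIntegrand c d w * Real.log ((1 - t) * (1 - w) / w) =
      betaIntegral a b * betaIntegral c d *
        (Complex.digamma b - Complex.digamma (a + b) + Complex.digamma d - Complex.digamma c) := by
  have hsplit : ∫ t in Ioo (0 : ℝ) 1, ∫ w in Ioo (0 : ℝ) 1,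
        betaIntegrand a b t * betaIntegrand c d w * Real.log ((1 - t) * (1 - w) / w) =
      ∫ t in Ioo (0 : ℝ) 1, ∫ w in Ioo (0 : ℝ) 1, betaIntegrand a b t * betaIntegrand c d w *
        (Real.log (1 - t) + (Real.log (1 - w) - Real.log w)) := by
    refine setIntegral_congr_fun measurableSet_Ioo fun t ht ↦
      setIntegral_congr_fun measurableSet_Ioo fun w hw ↦ ?_
    simp only [log_one_sub_mul_one_sub_div ht.2 hw, Complex.ofReal_add, Complex.ofReal_sub]
  rw [hsplit]
  simp only [← integral_Ioc_eq_integral_Ioo]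
  rw [integral_integral_mul_mul_add (intervalIntegrable_betaIntegrand ha hb).1
    (intervalIntegrable_betaIntegrand_mul_log_one_sub ha hb).1
    (intervalIntegrable_betaIntegrand hc hd).1
    (intervalIntegrable_betaIntegrand_mul_log_sub_log hc hd).1]
  simp only [← intervalIntegral.integral_of_le zero_le_one]
  rw [integral_betaIntegrand, integral_betaIntegrand,
    integral_betaIntegrand_mul_log_one_sub ha hb, integral_betaIntegrand_mul_log_sub_log hc hd]
  ring

theorem betaIntegral_mul_betaIntegral_add {a b c : ℂ} (ha : 0 < a.re) (hb : 0 < b.re)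
    (hc : 0 < c.re) :
    betaIntegral a b * betaIntegral (a + b) c =
      Gamma a * Gamma b * Gamma c / Gamma (a + b + c) := by
  have hab : 0 < (a + b).re := add_pos ha hb
  have hab0 := Complex.Gamma_ne_zero_of_re_pos hab
  rw [Complex.betaIntegral_eq_Gamma_mul_div a b ha hb,
    Complex.betaIntegral_eq_Gamma_mul_div (a + b) c hab hc]
  field_simp

theorem Gamma_one_half_mul_self : Gamma (1 / 2) * Gamma (1 / 2) = Real.pi := by
  rw [Complex.Gamma_one_half_eq, ← Complex.cpow_add _ _ (mod_cast Real.pi_ne_zero), add_halves,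
    Complex.cpow_one]

theorem betaIntegral_one_half_mul_betaIntegral_add_one_half {z : ℂ} (hz : 0 < z.re) :
    betaIntegral z (1 / 2) * betaIntegral (z + 1 / 2) (1 / 2) = Real.pi / z := by
  have hhalf : 0 < (1 / 2 : ℂ).re := by norm_num
  have hz0 : z ≠ 0 := Complex.ne_zero_of_re_pos hz
  have hGz0 := Complex.Gamma_ne_zero_of_re_pos hz
  rw [betaIntegral_mul_betaIntegral_add hz hhalf hhalf, add_assoc, add_halves,
    Complex.Gamma_add_one z hz0, mul_assoc, Gamma_one_half_mul_self]
  field_simp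

theorem digamma_eq_complex_digamma (z : ℂ) : digamma z = Complex.digamma z := rfl

theorem complex_digamma_one_half :
    Complex.digamma (1 / 2) = -(Real.eulerMascheroniConstant : ℂ) - (Real.log 4 : ℂ) := by
  have hlog : Real.log 4 = 2 * Real.log 2 := by
    rw [show (4 : ℝ) = 2 ^ 2 by norm_num, Real.log_pow, Nat.cast_ofNat]
  rw [Complex.digamma_one_half, hlog, Complex.ofReal_mul, Complex.ofReal_log zero_le_two,
    Complex.ofReal_ofNat]
  ring

/-- The Beta-type double integral from the proof of Proposition 2.4 of the paper:
for `Re s > 1/2`,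
`((2s-1)/(4π)) ∫₀¹∫₀¹ t^(s-1) (1-t)^(-1/2) w^(s-3/2) (1-w)^(-1/2) log((1-t)(1-w)/w) dw dt
  = -γ - log 4 - Ψ(s+1/2) + 1/(2s-1)`. -/
theorem beta_type_double_integral (s : ℂ) (hs : 1 / 2 < s.re) :
    (2 * s - 1) / (4 * (Real.pi : ℂ)) *
      ∫ t in Set.Ioo (0:ℝ) 1, ∫ w in Set.Ioo (0:ℝ) 1,
        (t : ℂ) ^ (s - 1) * ((1 - t : ℝ) : ℂ) ^ (-(1/2) : ℂ) *
          (w : ℂ) ^ (s - 3/2) * ((1 - w : ℝ) : ℂ) ^ (-(1/2) : ℂ) *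
          (Real.log ((1 - t) * (1 - w) / w) : ℂ) =
      -(Real.eulerMascheroniConstant : ℂ) - (Real.log 4 : ℂ) - digamma (s + 1 / 2)
        + 1 / (2 * s - 1) := by
  obtain ⟨z, rfl⟩ : ∃ z : ℂ, s = z + 1 / 2 := ⟨s - 1 / 2, by ring⟩
  have hhalf : 0 < (1 / 2 : ℂ).re := by norm_num
  have hz : 0 < z.re := by simpa using hs
  have hz0 : z ≠ 0 := Complex.ne_zero_of_re_pos hz
  have hintegrand (t w : ℝ) : (t : ℂ) ^ (z + 1 / 2 - 1) * ((1 - t : ℝ) : ℂ) ^ (-(1/2) : ℂ) *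
      (w : ℂ) ^ (z + 1 / 2 - 3/2) * ((1 - w : ℝ) : ℂ) ^ (-(1/2) : ℂ) =
      betaIntegrand (z + 1 / 2) (1 / 2) t * betaIntegrand z (1 / 2) w := by
    rw [betaIntegrand, betaIntegrand, show z + 1 / 2 - 3 / 2 = z - 1 by ring,
      show (-(1 / 2) : ℂ) = 1 / 2 - 1 by norm_num]
    push_cast
    ring
  have hπ : (Real.pi : ℂ) ≠ 0 := mod_cast Real.pi_ne_zero
  simp_rw [hintegrand]
  rw [integral_integral_betaIntegrand_mul_log (add_pos hz hhalf) hhalf hz hhalf,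
    mul_comm (betaIntegral _ _), betaIntegral_one_half_mul_betaIntegral_add_one_half hz,
    digamma_eq_complex_digamma, add_assoc, add_halves,
    Complex.digamma_apply_add_one z (ne_neg_natCast_of_re_pos hz),
    ← complex_digamma_one_half, show 2 * (z + 1 / 2) - 1 = 2 * z by ring]
  field_simp
  ring
end

section
/- Let s be a complex number with Re(s) > 1/2. Then lim_{y→0⁺} y^{−2s} ∑_{k=1}^∞ g_s(1 + k²/(4y²)) = (4^s/(4π)) · (Γ(s)²/Γ(2s)) · ζ(2s), where ζ is the Riemann zeta function and y^{−2s} denotes the principal power of the positive real y. -/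
open MeasureTheory

/-!
As `x → ∞`, dominated convergence in Euler's integral gives `x ^ s * g_s(1 + x) → B(s, s) / (4π)`,
so `F(x) = x ^ (2 * s) * g_s(1 + x ^ 2 / 4)` tends to `4 ^ s * B(s, s) / (4π)`. The expression in
the theorem is exactly `∑ k ^ (-2 * s) * F(k / y)` over `k ≥ 1`. All the points `k / y` go to
infinity uniformly in `k` as `y → 0⁺`, so `F` may be replaced by its limit, leaving the series of
`ζ(2 * s)`.
-/

open Filter Set Topology

section Series

variable {E : Type*} [NormedAddCommGroup E] [NormedSpace ℂ E] [CompleteSpace E]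

lemma tendsto_tsum_smul_comp_succ_div {c : ℕ → ℂ} (hc : Summable c) {F : ℝ → E} {L : E}
    (hF : Tendsto F atTop (𝓝 L)) :
    Tendsto (fun y : ℝ => ∑' k : ℕ, c k • F (((k : ℝ) + 1) / y)) (𝓝[>] 0)
      (𝓝 ((∑' k, c k) • L)) := by
  obtain ⟨R, hR⟩ : ∃ R, ∀ x ≥ R, ‖F x‖ ≤ ‖L‖ + 1 :=
    eventually_atTop.mp (hF.norm.eventually_le_const (lt_add_one ‖L‖))
  have hbound : ∀ᶠ y : ℝ in 𝓝[>] 0, ∀ k : ℕ,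
      ‖c k • F (((k : ℝ) + 1) / y)‖ ≤ ‖c k‖ * (‖L‖ + 1) := by
    filter_upwards [tendsto_inv_nhdsGT_zero.eventually_ge_atTop R, self_mem_nhdsWithin]
      with y hRy (hy : 0 < y) k
    have hle : y⁻¹ ≤ ((k : ℝ) + 1) / y := by
      rw [inv_eq_one_div]
      gcongr
      simp
    rw [norm_smul]
    gcongr
    exact hR _ (hRy.trans hle)
  have hterm (k : ℕ) :
      Tendsto (fun y : ℝ => c k • F (((k : ℝ) + 1) / y)) (𝓝[>] 0) (𝓝 (c k • L)) :=
    (hF.comp (tendsto_inv_nhdsGT_zero.const_mul_atTop k.cast_add_one_pos)).const_smul (c k)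
  rw [← hc.tsum_smul_const]
  exact tendsto_tsum_of_dominated_convergence (hc.norm.mul_right _) hterm hbound

lemma tendsto_cpow_neg_smul_tsum_succ_div {w : ℂ} (hw : 1 < w.re) {f : ℝ → E} {L : E}
    (hf : Tendsto (fun x : ℝ => (x : ℂ) ^ w • f x) atTop (𝓝 L)) :
    Tendsto (fun y : ℝ => (y : ℂ) ^ (-w) • ∑' k : ℕ, f (((k : ℝ) + 1) / y)) (𝓝[>] 0)
      (𝓝 (riemannZeta w • L)) := by
  have hsum : Summable fun k : ℕ => 1 / ((k : ℂ) + 1) ^ w :=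
    mod_cast (summable_nat_add_iff 1).mpr (Complex.summable_one_div_nat_cpow.mpr hw)
  rw [zeta_eq_tsum_one_div_nat_add_one_cpow hw]
  refine (tendsto_tsum_smul_comp_succ_div hsum hf).congr' ?_
  filter_upwards [self_mem_nhdsWithin] with y (hy : 0 < y)
  rw [← tsum_const_smul'']
  refine tsum_congr fun k => ?_
  have hk : ((k : ℂ) + 1) ^ w ≠ 0 := by simp [Complex.cpow_eq_zero_iff, k.cast_add_one_ne_zero]
  have hpow : ((((k : ℝ) + 1) / y : ℝ) : ℂ) ^ w = ((k : ℂ) + 1) ^ w * (y : ℂ) ^ (-w) := by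
    rw [Complex.ofReal_div, Complex.div_cpow_ofReal_nonneg (by positivity) hy.le,
      Complex.cpow_neg, div_eq_mul_inv]
    push_cast
    rfl
  rw [hpow, smul_smul, ← mul_assoc, one_div_mul_cancel hk, one_mul]

end Series

lemma ofReal_cpow_mul_add_cpow_neg {x u : ℝ} (hx : 0 < x) (hu : 0 ≤ u) (s : ℂ) :
    (x : ℂ) ^ s * ((x : ℂ) + u) ^ (-s) = ((1 + u / x : ℝ) : ℂ) ^ (-s) := by
  have hadd : (x : ℂ) + u = (x : ℂ) * ((1 + u / x : ℝ) : ℂ) := by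
    rw [← Complex.ofReal_mul, ← Complex.ofReal_add, mul_add, mul_one, mul_div_cancel₀ _ hx.ne']
  have hxs : (x : ℂ) ^ s ≠ 0 := by simp [Complex.cpow_eq_zero_iff, hx.ne']
  rw [hadd, Complex.mul_cpow_ofReal_nonneg hx.le (by positivity), Complex.cpow_neg,
    mul_inv_cancel_left₀ hxs]

lemma norm_ofReal_cpow_neg_le_one {r : ℝ} (hr : 1 ≤ r) {s : ℂ} (hs : 0 ≤ s.re) :
    ‖(r : ℂ) ^ (-s)‖ ≤ 1 := by
  rw [Complex.norm_cpow_eq_rpow_re_of_pos (by linarith), Complex.neg_re]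
  exact Real.rpow_le_one_of_one_le_of_nonpos hr (by linarith)

lemma tendsto_one_add_div_cpow_atTop (u : ℝ) (w : ℂ) :
    Tendsto (fun x : ℝ => ((1 + u / x : ℝ) : ℂ) ^ w) atTop (𝓝 1) := by
  have hbase : Tendsto (fun x : ℝ => ((1 + u / x : ℝ) : ℂ)) atTop (𝓝 1) := by
    simpa using ((tendsto_const_nhds (x := u)).div_atTop tendsto_id |>.const_add 1).ofReal
  simpa using hbase.cpow (tendsto_const_nhds (x := w)) Complex.one_mem_slitPlane

lemma tendsto_cpow_mul_integral_mul_add_cpow_neg {α : Type*} [MeasurableSpace α] {μ : Measure α}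
    {φ : α → ℂ} {u : α → ℝ} {s : ℂ} (hφ : Integrable φ μ) (hu : AEMeasurable u μ)
    (hu₀ : ∀ᵐ a ∂μ, 0 ≤ u a) (hs : 0 ≤ s.re) :
    Tendsto (fun x : ℝ => (x : ℂ) ^ s * ∫ a, φ a * ((x : ℂ) + u a) ^ (-s) ∂μ) atTop
      (𝓝 (∫ a, φ a ∂μ)) := by
  have hlim : Tendsto (fun x : ℝ => ∫ a, φ a * ((1 + u a / x : ℝ) : ℂ) ^ (-s) ∂μ) atTop
      (𝓝 (∫ a, φ a ∂μ)) := by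
    refine tendsto_integral_filter_of_dominated_convergence (fun a => ‖φ a‖) ?_ ?_ hφ.norm ?_
    · exact .of_forall fun x => hφ.aestronglyMeasurable.mul
        (AEMeasurable.pow_const (by fun_prop) _).aestronglyMeasurable
    · filter_upwards [eventually_gt_atTop 0] with x hx
      filter_upwards [hu₀] with a ha
      have hone : 1 ≤ 1 + u a / x := le_add_of_nonneg_right (by positivity)
      rw [norm_mul]
      exact mul_le_of_le_one_right (norm_nonneg _) (norm_ofReal_cpow_neg_le_one hone hs)
    · exact .of_forall fun a => by
        simpa using (tendsto_one_add_div_cpow_atTop (u a) (-s)).const_mul (φ a)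
  refine hlim.congr' ?_
  filter_upwards [eventually_gt_atTop 0] with x hx
  rw [← integral_const_mul]
  refine integral_congr_ae ?_
  filter_upwards [hu₀] with a ha
  rw [mul_left_comm, ofReal_cpow_mul_add_cpow_neg hx ha]

lemma integrableOn_Ioo_cpow_mul_one_sub_cpow {u v : ℂ} (hu : 0 < u.re) (hv : 0 < v.re) :
    IntegrableOn (fun t : ℝ => (t : ℂ) ^ (u - 1) * (1 - (t : ℂ)) ^ (v - 1)) (Ioo 0 1) :=
  (intervalIntegrable_iff_integrableOn_Ioo_of_le zero_le_one).mp
    (Complex.betaIntegral_convergent hu hv)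

lemma setIntegral_Ioo_cpow_mul_one_sub_cpow {u v : ℂ} (hu : 0 < u.re) (hv : 0 < v.re) :
    ∫ t in Ioo (0 : ℝ) 1, (t : ℂ) ^ (u - 1) * (1 - (t : ℂ)) ^ (v - 1) =
      Complex.Gamma u * Complex.Gamma v / Complex.Gamma (u + v) := by
  rw [← Complex.betaIntegral_eq_Gamma_mul_div u v hu hv, Complex.betaIntegral,
    intervalIntegral.integral_of_le zero_le_one, integral_Ioc_eq_integral_Ioo]

lemma tendsto_cpow_mul_greenH_one_add {s : ℂ} (hs : 0 < s.re) :
    Tendsto (fun x : ℝ => (x : ℂ) ^ s * greenH s (1 + x)) atTop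
      (𝓝 (1 / (4 * (Real.pi : ℂ)) * (Complex.Gamma s ^ 2 / Complex.Gamma (2 * s)))) := by
  have hnonneg : ∀ᵐ t ∂volume.restrict (Ioo (0 : ℝ) 1), 0 ≤ 1 - t :=
    (ae_restrict_mem measurableSet_Ioo).mono fun t ht => sub_nonneg.mpr ht.2.le
  have hlim := tendsto_cpow_mul_integral_mul_add_cpow_neg
    (integrableOn_Ioo_cpow_mul_one_sub_cpow hs hs) (by fun_prop) hnonneg hs.le
  rw [setIntegral_Ioo_cpow_mul_one_sub_cpow hs hs, ← sq, ← two_mul] at hlim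
  refine (hlim.const_mul (1 / (4 * (Real.pi : ℂ)))).congr fun x => ?_
  have hsub (t : ℝ) : ((1 + x : ℝ) : ℂ) - t = x + (1 - t : ℝ) := by push_cast; ring
  simp only [greenH, hsub]
  rw [mul_left_comm]

lemma ofReal_cpow_two_mul_eq_four_cpow_mul {x : ℝ} (hx : 0 ≤ x) (s : ℂ) :
    (x : ℂ) ^ (2 * s) = 4 ^ s * ((x ^ 2 / 4 : ℝ) : ℂ) ^ s := by
  have hfour : (4 : ℂ) = ((4 : ℝ) : ℂ) := by norm_cast
  rw [Complex.cpow_ofNat_mul, sq, ← Complex.mul_cpow_ofReal_nonneg hx hx, hfour,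
    ← Complex.mul_cpow_ofReal_nonneg (by norm_num) (by positivity)]
  congr 1
  push_cast
  ring

lemma tendsto_cpow_two_mul_mul_greenH_one_add_sq_div_four {s : ℂ} (hs : 0 < s.re) :
    Tendsto (fun x : ℝ => (x : ℂ) ^ (2 * s) * greenH s (1 + x ^ 2 / 4)) atTop
      (𝓝 (4 ^ s * (1 / (4 * (Real.pi : ℂ)) *
        (Complex.Gamma s ^ 2 / Complex.Gamma (2 * s))))) := by
  have hsq : Tendsto (fun x : ℝ => x ^ 2 / 4) atTop atTop :=
    (tendsto_pow_atTop two_ne_zero).atTop_div_const (by norm_num)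
  refine (((tendsto_cpow_mul_greenH_one_add hs).comp hsq).const_mul (4 ^ s)).congr' ?_
  filter_upwards [eventually_ge_atTop 0] with x hx
  rw [ofReal_cpow_two_mul_eq_four_cpow_mul hx, mul_assoc, Function.comp_apply]

/-- Lemma A.3 of the paper (cusp asymptotics): for `Re s > 1/2`,
`lim_{y→0⁺} y^(-2s) ∑_{k=1}^∞ g_s(1 + k²/(4y²)) = (4^s/(4π)) (Γ(s)²/Γ(2s)) ζ(2s)`. -/
theorem cusp_asymptotic (s : ℂ) (hs : 1 / 2 < s.re) :
    Filter.Tendsto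
      (fun y : ℝ => ((y : ℂ) ^ (-(2 * s))) *
        ∑' k : ℕ, greenH s (1 + ((k : ℝ) + 1) ^ 2 / (4 * y ^ 2)))
      (nhdsWithin 0 (Set.Ioi 0))
      (nhds ((4 : ℂ) ^ s / (4 * (Real.pi : ℂ)) * (Complex.Gamma s) ^ 2 /
        Complex.Gamma (2 * s) * riemannZeta (2 * s))) := by
  have hre : 1 < (2 * s).re := by simp; linarith
  have hlim := tendsto_cpow_neg_smul_tsum_succ_div hre
    (tendsto_cpow_two_mul_mul_greenH_one_add_sq_div_four (s := s) (by linarith))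
  have harg (k : ℕ) (y : ℝ) : (((k : ℝ) + 1) / y) ^ 2 / 4 = ((k : ℝ) + 1) ^ 2 / (4 * y ^ 2) := by
    rw [div_pow, div_div, mul_comm]
  simp only [harg, smul_eq_mul] at hlim
  convert hlim using 2
  ring
end
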